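/- arXiv:math/0501113 — 2 statements merged into one kernel-verified Lean document; each statement's English description precedes it below -/
import Mathlib

section
/- Let Ω be a bounded open convex set in ℝ² containing the origin in its interior. Assume ∂Ω is C¹ and, in an arclength parametrization, the components of the unit tangent vector are absolutely continuous, so the curvature κ is defined almost everywhere as an L¹ function on ∂Ω. Assume there are a > 0 and γ > 0 with κ(x) ≥ a for almost every x ∈ ∂Ω and ∫_{∂Ω} κ (log(2+κ))^{γ} dσ < ∞. Then there is a constant C such that the Fourier transform of the indicator function of the polar set Ω* satisfies |χ̂_{Ω*}(ξ)| ≤ C (1+|ξ|)^{−1} (log(2+|ξ|))^{−γ} for all ξ ∈ ℝ², where χ̂_{Ω*}(ξ) = ∫_{Ω*} e^{−i⟨x,ξ⟩} dx. -/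
/-!
Write `K = Ω*` and `ξ = Rθ` with `‖θ‖ = 1`, and let `w s` be the length of the chord of `K` on the
line `⟪x, θ⟫ = s`. By Fubini, the Fourier transform of the indicator function of `K` at `ξ` is
`∫ w s e^{-iRs} ds`, and `w` is concave on the interval `[α, β]` of heights of `K`.

With `h = π/R`, translation by `h` changes the sign of `e^{-iRs}`, so that replacing `w` by its
second difference with step `h` multiplies this integral by four. By concavity the second
difference is nonpositive away from the ends of `[α, β]`, and its integral is zero; so its `L¹` norm
is controlled by the chords within `2h` of the ends, whose lengths are at most the diameters of two
caps of `K`.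

To bound a cap of `K`, let `p = γ t₀` be the boundary point of `Ω` in direction `θ`. A point `x` of
`K` satisfies `⟪γ t, x⟫ ≤ 1` for every `t`, and `⟪p, x⟫ ≥ 1 - O(δ)` when it lies in the cap of depth
`δ`. Hence, by the mean value theorem, `|⟪γ' t₀, x⟫| ≤ O(δ/τ + ω(τ))`, where `ω` is the modulus of
continuity of `γ'`. Since `Ω` contains a ball around `0`, the tangent `γ' t₀` is uniformly
transversal to `p`, and the cap has diameter `O(δ/τ + δ + ω(τ))`. Finally the `L log^g L` condition
gives `ω(τ) ≤ 2 (M τ + A log(2 + M)^{-g})` for every `M ≥ 0`; with `δ = 2π/R`, the choice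
`τ ~ R^{-1/2}`, `M = R^{1/4}` makes everything `O(log(2 + R)^{-g})`.
-/

open MeasureTheory Set
open scoped Pointwise RealInnerProductSpace NNReal ENNReal

noncomputable section

abbrev E2 := EuclideanSpace ℝ (Fin 2)

/-- The embedding of an integer vector into the Euclidean plane. -/
def ek (k : Fin 2 → ℤ) : E2 := (WithLp.equiv 2 (Fin 2 → ℝ)).symm fun i => (k i : ℝ)

/-- Number of lattice points in a set. -/
def latticeCount (S : Set E2) : ℕ := Nat.card {k : Fin 2 → ℤ | ek k ∈ S}

/-- The lattice rest `E_Ω(t) = card(tΩ ∩ ℤ²) − t²·area(Ω)`. -/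
def latticeRest (Ω : Set E2) (t : ℝ) : ℝ :=
  (latticeCount (t • Ω) : ℝ) - t ^ 2 * (volume Ω).toReal

/-- The mean square discrepancy `𝒢_Ω(R,h) = ((1/h)∫_R^{R+h} |E_Ω(t)|² dt)^{1/2}`. -/
def meanSquare (Ω : Set E2) (R h : ℝ) : ℝ :=
  Real.sqrt ((1 / h) * ∫ t in R..(R + h), (latticeRest Ω t) ^ 2)

/-- The support function `ρ*(ξ) = sup {⟨x,ξ⟩ : x ∈ Ω}`. -/
def suppFn (Ω : Set E2) (ξ : E2) : ℝ := sSup ((fun x => ⟪x, ξ⟫) '' Ω)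

/-- `μ(θ,δ)`, the diameter of the cap `𝒞(θ,δ) = {x ∈ ∂Ω : ⟨x,θ⟩ ≥ ρ*(θ) − δ}`. -/
def capDiam (Ω : Set E2) (θ : E2) (δ : ℝ) : ℝ :=
  Metric.diam {x ∈ frontier Ω | suppFn Ω θ - δ ≤ ⟪x, θ⟫}

/-- Curvature bounded below in the generalized sense:
`sup_{θ∈S¹} sup_{δ>0} δ^{-1/2} μ(θ,δ) < ∞`. -/
def CurvBddBelow (Ω : Set E2) : Prop :=
  ∃ K : ℝ, ∀ θ : E2, ‖θ‖ = 1 → ∀ δ : ℝ, 0 < δ → capDiam Ω θ δ ≤ K * Real.sqrt δ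

/-- `γ` is an arclength (unit-speed) parametrization of the `C¹` boundary `∂Ω`, with
period `L`, whose unit tangent vector `γ'` is absolutely continuous with almost-everywhere
derivative `γ''`; the curvature is then `κ = ‖γ''‖`, defined a.e. as an `L¹` function. -/
def BoundaryParam (Ω : Set E2) (γ γ' γ'' : ℝ → E2) (L : ℝ) : Prop :=
  0 < L ∧ (∀ t, HasDerivAt γ (γ' t) t) ∧ Continuous γ' ∧ (∀ t, ‖γ' t‖ = 1) ∧
    Function.Periodic γ L ∧ γ '' Set.Ico 0 L = frontier Ω ∧ Set.InjOn γ (Set.Ico 0 L) ∧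
    (∀ t : ℝ, IntervalIntegrable γ'' volume 0 t) ∧
    (∀ t : ℝ, γ' t = γ' 0 + ∫ s in (0:ℝ)..t, γ'' s)

/-- The polar set `Ω* = {ξ : ρ*(ξ) ≤ 1}`. -/
def polarSet (Ω : Set E2) : Set E2 := {ξ | suppFn Ω ξ ≤ 1}

/-- The Fourier transform `χ̂_S(ξ) = ∫_S e^{−i⟨x,ξ⟩} dx` of the indicator function of `S`. -/
def fourierInd (S : Set E2) (ξ : E2) : ℂ :=
  ∫ x in S, Complex.exp (-Complex.I * (⟪x, ξ⟫ : ℝ))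

/-! ### Antiperiodic oscillation and second differences -/

section Oscillation

variable {G E : Type*} [AddCommGroup G] [MeasurableSpace G] [MeasurableAdd G] {μ : Measure G}
  [μ.IsAddRightInvariant] [NormedAddCommGroup E]

theorem integrable_fwdDiff {f : G → E} (hf : Integrable f μ) (h : G) :
    Integrable (fwdDiff h f) μ :=
  (hf.comp_add_right h).sub hf

variable [NormedSpace ℝ E]

theorem integral_fwdDiff_eq_zero {f : G → E} (hf : Integrable f μ) (h : G) :
    ∫ x, fwdDiff h f x ∂μ = 0 := by
  simp only [fwdDiff]
  rw [integral_sub (hf.comp_add_right h) hf, integral_add_right_eq_self, sub_self]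

theorem integral_fwdDiff_smul_of_antiperiodic {f : G → ℝ} {e : G → E} {h : G}
    (he : Function.Antiperiodic e h) (hfe : Integrable (fun x => f x • e x) μ) :
    ∫ x, fwdDiff h f x • e x ∂μ = (-2 : ℝ) • ∫ x, f x • e x ∂μ := by
  have hshift : (fun x => f (x + h) • e x) = fun x => -(f (x + h) • e (x + h)) := by
    funext x
    rw [he x, smul_neg, neg_neg]
  have hint : Integrable (fun x => f (x + h) • e x) μ := by
    rw [hshift]
    exact (hfe.comp_add_right h).neg
  simp only [fwdDiff, sub_smul]
  rw [integral_sub hint hfe, hshift, integral_neg,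
    integral_add_right_eq_self (fun x => f x • e x)]
  module

theorem norm_integral_smul_le_of_antiperiodic {f : G → ℝ} {e : G → E} {h : G}
    (he : Function.Antiperiodic e h) (hem : AEStronglyMeasurable e μ) (he1 : ∀ x, ‖e x‖ ≤ 1)
    (hf : Integrable f μ) :
    4 * ‖∫ x, f x • e x ∂μ‖ ≤ ∫ x, |fwdDiff h (fwdDiff h f) x| ∂μ := by
  have hsmul : ∀ {v : G → ℝ}, Integrable v μ → Integrable (fun x => v x • e x) μ := fun hv =>
    hv.smul_bdd 1 hem (Filter.Eventually.of_forall he1)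
  have htwice : ∫ x, fwdDiff h (fwdDiff h f) x • e x ∂μ = (4 : ℝ) • ∫ x, f x • e x ∂μ := by
    rw [integral_fwdDiff_smul_of_antiperiodic he (hsmul (integrable_fwdDiff hf h)),
      integral_fwdDiff_smul_of_antiperiodic he (hsmul hf), smul_smul]
    norm_num
  calc 4 * ‖∫ x, f x • e x ∂μ‖ = ‖∫ x, fwdDiff h (fwdDiff h f) x • e x ∂μ‖ := by
        rw [htwice, norm_smul, Real.norm_of_nonneg zero_le_four]
    _ ≤ ∫ x, |fwdDiff h (fwdDiff h f) x| ∂μ := by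
        refine norm_integral_le_of_norm_le
          (integrable_fwdDiff (integrable_fwdDiff hf h) h).abs (.of_forall fun x => ?_)
        rw [norm_smul, Real.norm_eq_abs]
        exact mul_le_of_le_one_right (abs_nonneg _) (he1 x)

end Oscillation

theorem integral_abs_le_two_mul_of_integral_eq_zero {X : Type*} [MeasurableSpace X]
    {μ : Measure X} {f g : X → ℝ} (hf : Integrable f μ) (hf0 : ∫ x, f x ∂μ = 0)
    (hg : Integrable g μ) (hg0 : 0 ≤ g) (hfg : f ≤ g) :
    ∫ x, |f x| ∂μ ≤ 2 * ∫ x, g x ∂μ := by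
  calc ∫ x, |f x| ∂μ ≤ ∫ x, (2 * g x - f x) ∂μ := by
        refine integral_mono hf.abs ((hg.const_mul 2).sub hf) fun x => abs_le.2 ⟨?_, ?_⟩
        · linarith [show 0 ≤ g x from hg0 x]
        · linarith [show f x ≤ g x from hfg x]
    _ = 2 * ∫ x, g x ∂μ := by
        rw [integral_sub (hg.const_mul 2) hf, integral_const_mul, hf0, sub_zero]

theorem fwdDiff_fwdDiff_apply (f : ℝ → ℝ) (h s : ℝ) :
    fwdDiff h (fwdDiff h f) s = f (s + 2 * h) - 2 * f (s + h) + f s := by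
  simp only [fwdDiff, add_assoc, ← two_mul]
  ring

theorem fwdDiff_fwdDiff_nonpos_of_concaveOn {I : Set ℝ} {f : ℝ → ℝ} (hf : ConcaveOn ℝ I f)
    {s h : ℝ} (hs : s ∈ I) (hs' : s + 2 * h ∈ I) : fwdDiff h (fwdDiff h f) s ≤ 0 := by
  have hmid := hf.2 hs hs' one_half_pos.le one_half_pos.le (add_halves 1)
  simp only [smul_eq_mul] at hmid
  rw [show 1 / 2 * s + 1 / 2 * (s + 2 * h) = s + h by ring] at hmid
  rw [fwdDiff_fwdDiff_apply]
  linarith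

theorem fwdDiff_fwdDiff_le_indicator {w : ℝ → ℝ} {α β h W₁ W₂ : ℝ}
    (hw0 : 0 ≤ w) (hsupp : ∀ s ∉ Icc α β, w s = 0) (hconc : ConcaveOn ℝ (Icc α β) w)
    (hh : 0 ≤ h) (hW₁ : ∀ s ≤ α + 2 * h, w s ≤ W₁) (hW₂ : ∀ s, β - 2 * h ≤ s → w s ≤ W₂) (s : ℝ) :
    fwdDiff h (fwdDiff h w) s ≤ (Icc (α - 2 * h) α).indicator (fun _ => 2 * W₁) s +
      (Icc (β - 2 * h) β).indicator (fun _ => 2 * W₂) s := by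
  have hmiddle : 0 ≤ w (s + h) := hw0 (s + h)
  have hleft_nonneg : 0 ≤ (Icc (α - 2 * h) α).indicator (fun _ => 2 * W₁) s :=
    indicator_nonneg (fun _ _ => mul_nonneg zero_le_two ((hw0 _).trans (hW₁ _ le_rfl))) s
  have hright_nonneg : 0 ≤ (Icc (β - 2 * h) β).indicator (fun _ => 2 * W₂) s :=
    indicator_nonneg (fun _ _ => mul_nonneg zero_le_two ((hw0 _).trans (hW₂ _ le_rfl))) s
  by_cases hleft : s ∈ Icc (α - 2 * h) α
  · rw [indicator_of_mem hleft, fwdDiff_fwdDiff_apply]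
    linarith [hW₁ s (by linarith [hleft.2]), hW₁ (s + 2 * h) (by linarith [hleft.2])]
  by_cases hright : s ∈ Icc (β - 2 * h) β
  · rw [indicator_of_mem hright, fwdDiff_fwdDiff_apply]
    linarith [hW₂ s hright.1, hW₂ (s + 2 * h) (by linarith [hright.1])]
  refine le_trans ?_ (add_nonneg hleft_nonneg hright_nonneg)
  by_cases hinside : s ∈ Icc α β ∧ s + 2 * h ∈ Icc α β
  · exact fwdDiff_fwdDiff_nonpos_of_concaveOn hconc hinside.1 hinside.2
  · have hs : s ∉ Icc α β := by grind
    have hs' : s + 2 * h ∉ Icc α β := by grind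
    rw [fwdDiff_fwdDiff_apply, hsupp s hs, hsupp _ hs']
    linarith

theorem integral_abs_fwdDiff_fwdDiff_le {w : ℝ → ℝ} {α β h W₁ W₂ : ℝ} (hint : Integrable w)
    (hw0 : 0 ≤ w) (hsupp : ∀ s ∉ Icc α β, w s = 0) (hconc : ConcaveOn ℝ (Icc α β) w)
    (hh : 0 ≤ h) (hW₁ : ∀ s ≤ α + 2 * h, w s ≤ W₁) (hW₂ : ∀ s, β - 2 * h ≤ s → w s ≤ W₂) :
    ∫ s, |fwdDiff h (fwdDiff h w) s| ≤ 8 * h * (W₁ + W₂) := by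
  have hindicator : ∀ c W : ℝ, Integrable ((Icc (c - 2 * h) c).indicator fun _ => 2 * W) :=
    fun c W => (integrable_indicator_iff measurableSet_Icc).2
      (integrableOn_const measure_Icc_lt_top.ne)
  have hnonneg : ∀ c W : ℝ, 0 ≤ W → 0 ≤ (Icc (c - 2 * h) c).indicator fun _ => 2 * W :=
    fun c W hW s => indicator_nonneg (fun _ _ => mul_nonneg zero_le_two hW) s
  have hindicator_integral : ∀ c W : ℝ,
      ∫ s, (Icc (c - 2 * h) c).indicator (fun _ => 2 * W) s = 4 * h * W := by
    intro c W
    rw [integral_indicator_const _ measurableSet_Icc, Real.volume_real_Icc_of_le (by linarith),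
      smul_eq_mul]
    ring
  refine (integral_abs_le_two_mul_of_integral_eq_zero
    (integrable_fwdDiff (integrable_fwdDiff hint h) h)
    (integral_fwdDiff_eq_zero (integrable_fwdDiff hint h) h)
    ((hindicator α W₁).add (hindicator β W₂))
    (add_nonneg (hnonneg α W₁ ((hw0 _).trans (hW₁ _ le_rfl)))
      (hnonneg β W₂ ((hw0 _).trans (hW₂ _ le_rfl))))
    (fwdDiff_fwdDiff_le_indicator hw0 hsupp hconc hh hW₁ hW₂)).trans_eq ?_
  rw [integral_add' (hindicator α W₁) (hindicator β W₂), hindicator_integral, hindicator_integral]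
  ring

/-! ### Chords of planar convex sets -/

theorem convex_fibre {E F : Type*} [AddCommGroup E] [Module ℝ E] [AddCommGroup F] [Module ℝ F]
    {K : Set (E × F)} (hK : Convex ℝ K) (x : E) : Convex ℝ (Prod.mk x ⁻¹' K) := by
  intro y hy z hz a b ha hb hab
  have hmem := hK hy hz ha hb hab
  rwa [Prod.smul_mk, Prod.smul_mk, Prod.mk_add_mk, Convex.combo_self hab] at hmem

theorem eq_Icc_of_convex_of_isCompact {A : Set ℝ} (hA : Convex ℝ A) (hAc : IsCompact A)
    (hne : A.Nonempty) : A = Icc (sInf A) (sSup A) :=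
  eq_Icc_of_connected_compact ⟨hne, hA.isPreconnected⟩ hAc

theorem volume_real_of_convex_of_isCompact {A : Set ℝ} (hA : Convex ℝ A) (hAc : IsCompact A)
    (hne : A.Nonempty) : volume.real A = sSup A - sInf A := by
  conv_lhs => rw [eq_Icc_of_convex_of_isCompact hA hAc hne]
  exact Real.volume_real_Icc_of_le (csInf_le_csSup hne hAc.bddBelow hAc.bddAbove)

/-- The one-dimensional Brunn–Minkowski inequality, applied to parallel chords. -/
theorem concaveOn_volume_real_fibre {E : Type*} [AddCommGroup E] [Module ℝ E] {K : Set (E × ℝ)}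
    (hK : Convex ℝ K) (hfib : ∀ x, IsCompact (Prod.mk x ⁻¹' K)) :
    ConcaveOn ℝ (Prod.fst '' K) fun x => volume.real (Prod.mk x ⁻¹' K) := by
  refine ⟨hK.linear_image (LinearMap.fst ℝ E ℝ), ?_⟩
  rintro _ ⟨⟨x, u⟩, hxu, rfl⟩ _ ⟨⟨y, v⟩, hyv, rfl⟩ a b ha hb hab
  set A := Prod.mk x ⁻¹' K
  set B := Prod.mk y ⁻¹' K
  set C := Prod.mk (a • x + b • y) ⁻¹' K
  have hA : A.Nonempty := ⟨u, hxu⟩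
  have hB : B.Nonempty := ⟨v, hyv⟩
  have hcombo : ∀ p ∈ A, ∀ q ∈ B, a • p + b • q ∈ C := fun p hp q hq => hK hp hq ha hb hab
  have hinf := hcombo _ ((hfib x).sInf_mem hA) _ ((hfib y).sInf_mem hB)
  have hsup := hcombo _ ((hfib x).sSup_mem hA) _ ((hfib y).sSup_mem hB)
  change a • volume.real A + b • volume.real B ≤ volume.real C
  rw [volume_real_of_convex_of_isCompact (convex_fibre hK x) (hfib x) hA,
    volume_real_of_convex_of_isCompact (convex_fibre hK y) (hfib y) hB,
    volume_real_of_convex_of_isCompact (convex_fibre hK _) (hfib _) ⟨_, hinf⟩]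
  have hupper := le_csSup (hfib _).bddAbove hsup
  have hlower := csInf_le (hfib _).bddBelow hinf
  simp only [smul_eq_mul] at hupper hlower ⊢
  linarith

theorem setIntegral_comp_fst {X Y E : Type*} [MeasurableSpace X] [MeasurableSpace Y]
    {μ : Measure X} {ν : Measure Y} [SFinite μ] [SFinite ν] [NormedAddCommGroup E]
    [NormedSpace ℝ E] [CompleteSpace E] {K : Set (X × Y)} (hK : MeasurableSet K) {φ : X → E}
    (hφ : IntegrableOn (fun q => φ q.1) K (μ.prod ν)) :
    ∫ q in K, φ q.1 ∂μ.prod ν = ∫ x, ν.real (Prod.mk x ⁻¹' K) • φ x ∂μ := by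
  rw [← integral_indicator hK, integral_prod _ ((integrable_indicator_iff hK).2 hφ)]
  congr 1 with x
  rw [← integral_indicator_const (φ x) (measurable_prodMk_left hK)]
  rfl

/-- The linear coordinates of the plane with respect to an orthonormal basis. -/
def planeCoords (b : OrthonormalBasis (Fin 2) ℝ E2) : (ℝ × ℝ) ≃L[ℝ] E2 :=
  (ContinuousLinearEquiv.finTwoArrow ℝ ℝ).symm.trans
    ((PiLp.continuousLinearEquiv 2 ℝ fun _ : Fin 2 => ℝ).symm.trans
      b.repr.symm.toContinuousLinearEquiv)

section PlaneCoords

variable (b : OrthonormalBasis (Fin 2) ℝ E2)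

theorem planeCoords_apply (q : ℝ × ℝ) : planeCoords b q = q.1 • b 0 + q.2 • b 1 := by
  change b.repr.symm (WithLp.toLp 2 ![q.1, q.2]) = _
  simp [← b.sum_repr_symm]

theorem measurePreserving_planeCoords : MeasurePreserving (planeCoords b) volume volume :=
  b.measurePreserving_repr_symm.comp
    ((PiLp.volume_preserving_toLp (Fin 2)).comp ((volume_preserving_finTwoArrow ℝ).symm _))

theorem inner_planeCoords_zero (q : ℝ × ℝ) : ⟪planeCoords b q, b 0⟫ = q.1 := by
  have h01 : ⟪b 1, b 0⟫ = 0 := b.inner_eq_zero (by decide)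
  simp [planeCoords_apply, inner_add_left, inner_smul_left, h01]

theorem dist_planeCoords_mk (s y z : ℝ) :
    dist (planeCoords b (s, y)) (planeCoords b (s, z)) = dist y z := by
  rw [planeCoords_apply, planeCoords_apply, dist_add_left, dist_eq_norm, ← sub_smul, norm_smul,
    b.norm_eq_one, mul_one, dist_eq_norm]

theorem isCompact_fibre_planeCoords {K : Set E2} (hK : IsCompact K) (s : ℝ) :
    IsCompact (Prod.mk s ⁻¹' (planeCoords b ⁻¹' K)) := by
  have hemb : Isometry fun y => planeCoords b (s, y) := .of_dist_eq (dist_planeCoords_mk b s)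
  exact hemb.isClosedEmbedding.isCompact_preimage hK

end PlaneCoords

section OrderTopology

variable {α : Type*} [TopologicalSpace α] [LinearOrder α] [OrderTopology α] [DenselyOrdered α]
  {A : Set α} {a : α}

theorem mem_frontier_of_isLeast [NoMinOrder α] (ha : IsLeast A a) : a ∈ frontier A := by
  refine ⟨subset_closure ha.1, fun hint => ?_⟩
  have hmem : a ∈ interior (Ici a) := interior_mono ha.2 hint
  rw [interior_Ici] at hmem
  exact lt_irrefl a hmem

theorem mem_frontier_of_isGreatest [NoMaxOrder α] (ha : IsGreatest A a) : a ∈ frontier A :=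
  mem_frontier_of_isLeast (α := αᵒᵈ) ha

end OrderTopology

theorem volume_real_fibre_le_capDiam (b : OrthonormalBasis (Fin 2) ℝ E2) {K : Set E2}
    (hK : IsCompact K) (hconv : Convex ℝ K) {θ : E2} {s δ : ℝ}
    (hs : ∀ x, ⟪x, b 0⟫ = s → suppFn K θ - δ ≤ ⟪x, θ⟫) :
    volume.real (Prod.mk s ⁻¹' (planeCoords b ⁻¹' K)) ≤ capDiam K θ δ := by
  set A := Prod.mk s ⁻¹' (planeCoords b ⁻¹' K)
  rcases A.eq_empty_or_nonempty with hempty | hne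
  · rw [hempty, measureReal_empty]
    exact Metric.diam_nonneg
  have hA : IsCompact A := isCompact_fibre_planeCoords b hK s
  have hAconv : Convex ℝ A := convex_fibre (hconv.linear_preimage (planeCoords b).toLinearMap) s
  have hcont : Continuous fun y => planeCoords b (s, y) :=
    (planeCoords b).continuous.comp (Continuous.prodMk_right s)
  have hcap : ∀ y ∈ frontier A,
      planeCoords b (s, y) ∈ {x ∈ frontier K | suppFn K θ - δ ≤ ⟪x, θ⟫} := fun y hy =>
    ⟨hcont.frontier_preimage_subset K hy, hs _ (inner_planeCoords_zero b _)⟩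
  have hbdd : Bornology.IsBounded {x ∈ frontier K | suppFn K θ - δ ≤ ⟪x, θ⟫} :=
    hK.isBounded.subset ((sep_subset _ _).trans hK.isClosed.frontier_subset)
  calc volume.real A = sSup A - sInf A := volume_real_of_convex_of_isCompact hAconv hA hne
    _ ≤ dist (planeCoords b (s, sSup A)) (planeCoords b (s, sInf A)) := by
        rw [dist_planeCoords_mk, Real.dist_eq]
        exact le_abs_self _
    _ ≤ capDiam K θ δ := Metric.dist_le_diam_of_mem hbdd
        (hcap _ (mem_frontier_of_isGreatest (hA.isGreatest_sSup hne)))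
        (hcap _ (mem_frontier_of_isLeast (hA.isLeast_sInf hne)))

theorem image_inner_eq_Icc {K : Set E2} (hK : IsCompact K) (hconv : Convex ℝ K)
    (hne : K.Nonempty) (θ : E2) :
    (fun x => ⟪x, θ⟫) '' K = Icc (-suppFn K (-θ)) (suppFn K θ) := by
  have himage : Convex ℝ ((fun x => ⟪x, θ⟫) '' K) :=
    hconv.linear_image ((innerₗ E2).flip θ)
  have hinf : sInf ((fun x => ⟪x, θ⟫) '' K) = -suppFn K (-θ) := by
    rw [Real.sInf_def, suppFn, ← image_neg_eq_neg, image_image]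
    simp only [inner_neg_right]
  rw [eq_Icc_of_convex_of_isCompact himage (hK.image (by fun_prop)) (hne.image _), hinf]
  rfl

/-! ### The Fourier transform of a planar convex set -/

theorem norm_exp_neg_I_mul_ofReal (t : ℝ) : ‖Complex.exp (-Complex.I * t)‖ = 1 := by
  rw [show -Complex.I * (t : ℂ) = ((-t : ℝ) : ℂ) * Complex.I by push_cast; ring,
    Complex.norm_exp_ofReal_mul_I]

theorem norm_fourierInd_le_volume_real {S : Set E2} (ξ : E2) :
    ‖fourierInd S ξ‖ ≤ volume.real S := by
  refine (norm_integral_le_integral_norm _).trans_eq ?_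
  simp only [norm_exp_neg_I_mul_ofReal, setIntegral_const, smul_eq_mul, mul_one]

theorem antiperiodic_exp_neg_I_mul {R : ℝ} (hR : R ≠ 0) :
    Function.Antiperiodic (fun s : ℝ => Complex.exp (-Complex.I * (R * s : ℝ))) (Real.pi / R) := by
  intro s
  have hphase : -Complex.I * ((R * (s + Real.pi / R) : ℝ) : ℂ) =
      -Complex.I * ((R * s : ℝ) : ℂ) - Real.pi * Complex.I := by
    rw [mul_add, mul_div_cancel₀ _ hR]
    push_cast
    ring
  simp only [hphase, Complex.exp_sub, Complex.exp_pi_mul_I, div_neg, div_one]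

theorem fourierInd_smul_basis (b : OrthonormalBasis (Fin 2) ℝ E2) {K : Set E2}
    (hK : IsCompact K) (R : ℝ) :
    fourierInd K (R • b 0) = ∫ s, volume.real (Prod.mk s ⁻¹' (planeCoords b ⁻¹' K)) •
      Complex.exp (-Complex.I * (R * s : ℝ)) := by
  have hcompact : IsCompact (planeCoords b ⁻¹' K) :=
    (planeCoords b).toHomeomorph.isClosedEmbedding.isCompact_preimage hK
  have hcont : Continuous fun q : ℝ × ℝ => Complex.exp (-Complex.I * (R * q.1 : ℝ)) := by fun_prop
  rw [fourierInd, ← (measurePreserving_planeCoords b).setIntegral_preimage_emb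
    (planeCoords b).toHomeomorph.measurableEmbedding]
  simp only [inner_smul_right, inner_planeCoords_zero]
  exact setIntegral_comp_fst (φ := fun s => Complex.exp (-Complex.I * (R * s : ℝ)))
    hcompact.measurableSet (hcont.continuousOn.integrableOn_compact hcompact)

theorem exists_orthonormalBasis_apply_zero {θ : E2} (hθ : ‖θ‖ = 1) :
    ∃ b : OrthonormalBasis (Fin 2) ℝ E2, b 0 = θ := by
  have horth : Orthonormal ℝ (({0} : Set (Fin 2)).domRestrict fun _ => θ) :=
    ⟨fun _ => hθ, fun i j hij => (hij (Subsingleton.elim i j)).elim⟩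
  obtain ⟨b, hb⟩ := horth.exists_orthonormalBasis_extension_of_card_eq (by simp)
  exact ⟨b, hb 0 rfl⟩

theorem norm_fourierInd_le_capDiam {K : Set E2} (hK : IsCompact K) (hconv : Convex ℝ K)
    {θ : E2} (hθ : ‖θ‖ = 1) {R : ℝ} (hR : 0 < R) :
    ‖fourierInd K (R • θ)‖ ≤ 2 * Real.pi / R *
      (capDiam K θ (2 * Real.pi / R) + capDiam K (-θ) (2 * Real.pi / R)) := by
  rcases K.eq_empty_or_nonempty with rfl | hne
  · simp [fourierInd, capDiam]
  obtain ⟨b, rfl⟩ := exists_orthonormalBasis_apply_zero hθ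
  set K' := planeCoords b ⁻¹' K
  have hK' : IsCompact K' := (planeCoords b).toHomeomorph.isClosedEmbedding.isCompact_preimage hK
  have hfst : Prod.fst '' K' = Icc (-suppFn K (-b 0)) (suppFn K (b 0)) := by
    rw [← image_inner_eq_Icc hK hconv hne, ← image_preimage_eq K (planeCoords b).surjective,
      image_image]
    simp only [inner_planeCoords_zero, K']
  have hconc := concaveOn_volume_real_fibre
    (hconv.linear_preimage (planeCoords b).toLinearMap) (isCompact_fibre_planeCoords b hK)
  have hint : Integrable fun s => volume.real (Prod.mk s ⁻¹' K') :=
    Measure.integrable_measure_prodMk_left hK'.measurableSet hK'.measure_lt_top.ne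
  have hsecond := integral_abs_fwdDiff_fwdDiff_le hint (fun _ => measureReal_nonneg)
    (fun s hs => by
      rw [← hfst] at hs
      rw [show Prod.mk s ⁻¹' K' = ∅ from eq_empty_of_forall_notMem fun y hy => hs ⟨_, hy, rfl⟩,
        measureReal_empty])
    (hfst ▸ hconc) (div_pos Real.pi_pos hR).le
    (fun s hs => volume_real_fibre_le_capDiam b hK hconv (θ := -b 0)
      (δ := 2 * (Real.pi / R)) fun x hx => by
        rw [inner_neg_right, hx]
        linarith)
    (fun s hs => volume_real_fibre_le_capDiam b hK hconv fun x hx => hx ▸ hs)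
  have hfourier := norm_integral_smul_le_of_antiperiodic (antiperiodic_exp_neg_I_mul hR.ne')
    (Continuous.aestronglyMeasurable (by fun_prop))
    (fun s => (norm_exp_neg_I_mul_ofReal _).le) hint
  rw [fourierInd_smul_basis b hK, mul_div_assoc]
  linarith

/-! ### Caps of the polar set -/

theorem suppFn_smul (S : Set E2) {c : ℝ} (hc : 0 ≤ c) (θ : E2) :
    suppFn S (c • θ) = c * suppFn S θ := by
  rw [suppFn, suppFn, ← smul_eq_mul, ← Real.sSup_smul_of_nonneg hc, ← image_smul, image_image]
  simp only [inner_smul_right, smul_eq_mul]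

theorem capDiam_smul (S : Set E2) {c : ℝ} (hc : 0 < c) (θ : E2) (δ : ℝ) :
    capDiam S (c • θ) (c * δ) = capDiam S θ δ := by
  simp only [capDiam, suppFn_smul S hc.le, inner_smul_right, ← mul_sub, mul_le_mul_iff_right₀ hc]

section PolarSet

variable {Ω : Set E2}

theorem mem_polarSet_iff (hbdd : Bornology.IsBounded Ω) (hne : Ω.Nonempty) {ξ : E2} :
    ξ ∈ polarSet Ω ↔ ∀ x ∈ Ω, ⟪x, ξ⟫ ≤ 1 := by
  obtain ⟨B, hB⟩ := hbdd.exists_norm_le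
  have habove : BddAbove ((fun x => ⟪x, ξ⟫) '' Ω) := ⟨B * ‖ξ‖, forall_mem_image.2 fun x hx =>
    (real_inner_le_norm x ξ).trans (by gcongr; exact hB x hx)⟩
  exact (csSup_le_iff habove (hne.image _)).trans forall_mem_image

theorem polarSet_eq_biInter (hbdd : Bornology.IsBounded Ω) (hne : Ω.Nonempty) :
    polarSet Ω = ⋂ x ∈ Ω, {ξ | ⟪x, ξ⟫ ≤ 1} := by
  ext ξ
  simp only [mem_polarSet_iff hbdd hne, mem_iInter, mem_ofPred_eq]

theorem convex_polarSet (hbdd : Bornology.IsBounded Ω) (hne : Ω.Nonempty) :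
    Convex ℝ (polarSet Ω) := by
  rw [polarSet_eq_biInter hbdd hne]
  exact convex_iInter₂ fun x _ => convex_halfSpace_le (innerₗ E2 x).isLinear 1

theorem isClosed_polarSet (hbdd : Bornology.IsBounded Ω) (hne : Ω.Nonempty) :
    IsClosed (polarSet Ω) := by
  rw [polarSet_eq_biInter hbdd hne]
  exact isClosed_biInter fun x _ => isClosed_le (by fun_prop) continuous_const

theorem inner_le_one_of_mem_closure (hbdd : Bornology.IsBounded Ω) {p ξ : E2}
    (hp : p ∈ closure Ω) (hξ : ξ ∈ polarSet Ω) : ⟪p, ξ⟫ ≤ 1 := by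
  have hne : Ω.Nonempty := closure_nonempty_iff.1 ⟨p, hp⟩
  exact closure_minimal (s := Ω) (t := {y | ⟪y, ξ⟫ ≤ 1}) ((mem_polarSet_iff hbdd hne).1 hξ)
    (isClosed_le (by fun_prop) continuous_const) hp

theorem norm_le_inv_of_mem_polarSet (hbdd : Bornology.IsBounded Ω) {r : ℝ} (hr : 0 < r)
    (hball : Metric.closedBall 0 r ⊆ Ω) {ξ : E2} (hξ : ξ ∈ polarSet Ω) : ‖ξ‖ ≤ r⁻¹ := by
  rcases eq_or_ne ξ 0 with rfl | hξ0
  · simpa using hr.le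
  have hnorm : ‖ξ‖ ≠ 0 := norm_ne_zero_iff.2 hξ0
  have hmem : (r * ‖ξ‖⁻¹) • ξ ∈ Ω := hball <| by
    rw [mem_closedBall_zero_iff, norm_smul, Real.norm_of_nonneg (by positivity),
      inv_mul_cancel_right₀ hnorm]
  have hle := inner_le_one_of_mem_closure hbdd (subset_closure hmem) hξ
  rw [real_inner_smul_left, real_inner_self_eq_norm_sq] at hle
  rw [← one_div, le_div_iff₀ hr]
  calc ‖ξ‖ * r = r * ‖ξ‖⁻¹ * ‖ξ‖ ^ 2 := by field_simp
    _ ≤ 1 := hle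

theorem isCompact_polarSet (hbdd : Bornology.IsBounded Ω) (h0 : Ω ∈ nhds 0) :
    IsCompact (polarSet Ω) := by
  obtain ⟨r, hr, hball⟩ := Metric.nhds_basis_closedBall.mem_iff.1 h0
  exact Metric.isCompact_of_isClosed_isBounded (isClosed_polarSet hbdd ⟨0, mem_of_mem_nhds h0⟩)
    (isBounded_iff_forall_norm_le.2 ⟨r⁻¹, fun _ => norm_le_inv_of_mem_polarSet hbdd hr hball⟩)

theorem exists_mem_polarSet_inner_eq_one (hconv : Convex ℝ Ω) (hopen : IsOpen Ω)
    (hbdd : Bornology.IsBounded Ω) (h0 : 0 ∈ Ω) {p : E2} (hp : p ∉ Ω) :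
    ∃ m ∈ polarSet Ω, ⟪p, m⟫ = 1 := by
  obtain ⟨f, hf⟩ := geometric_hahn_banach_open_point hconv hopen hp
  have hfp : 0 < f p := by simpa using hf 0 h0
  set v := (InnerProductSpace.toDual ℝ E2).symm f
  have hv : ∀ y, ⟪y, v⟫ = f y := fun y => by
    rw [real_inner_comm, InnerProductSpace.toDual_symm_apply]
  refine ⟨(f p)⁻¹ • v, (mem_polarSet_iff hbdd ⟨0, h0⟩).2 fun y hy => ?_, ?_⟩
  · rw [inner_smul_right, hv, inv_mul_le_iff₀ hfp, mul_one]
    exact (hf y hy).le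
  · rw [inner_smul_right, hv, inv_mul_cancel₀ hfp.ne']

theorem suppFn_polarSet_eq_one (hconv : Convex ℝ Ω) (hopen : IsOpen Ω)
    (hbdd : Bornology.IsBounded Ω) (h0 : 0 ∈ Ω) {p : E2} (hp : p ∈ frontier Ω) :
    suppFn (polarSet Ω) p = 1 := by
  obtain ⟨m, hm, hpm⟩ := exists_mem_polarSet_inner_eq_one hconv hopen hbdd h0
    (hopen.frontier_eq ▸ hp).2
  refine IsGreatest.csSup_eq ⟨⟨m, hm, (real_inner_comm _ _).trans hpm⟩, ?_⟩
  refine forall_mem_image.2 fun x hx => (real_inner_comm _ _).trans_le ?_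
  exact inner_le_one_of_mem_closure hbdd (frontier_subset_closure hp) hx

end PolarSet

theorem exists_pos_smul_mem_frontier {E : Type*} [NormedAddCommGroup E] [NormedSpace ℝ E]
    {Ω : Set E} (hconv : Convex ℝ Ω) (hbdd : Bornology.IsBounded Ω) (h0 : Ω ∈ nhds 0) {v : E}
    (hv : v ≠ 0) : ∃ c > (0 : ℝ), c • v ∈ frontier Ω := by
  have hgauge : 0 < gauge Ω v :=
    (gauge_pos (absorbent_nhds_zero h0) (NormedSpace.isVonNBounded_of_isBounded ℝ hbdd)).2 hv
  refine ⟨(gauge Ω v)⁻¹, inv_pos.2 hgauge, ?_⟩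
  rw [← gauge_eq_one_iff_mem_frontier hconv h0, gauge_smul_of_nonneg (inv_pos.2 hgauge).le,
    smul_eq_mul, inv_mul_cancel₀ hgauge.ne']

theorem exists_eq_inner_smul_add_smul {E : Type*} [NormedAddCommGroup E] [InnerProductSpace ℝ E]
    [Fact (Module.finrank ℝ E = 1 + 1)] {T m : E} (hT : ‖T‖ = 1) (hm : m ≠ 0) (hTm : ⟪T, m⟫ = 0)
    (z : E) : ∃ c : ℝ, z = ⟪T, z⟫ • T + c • m := by
  have hfinrank : Module.finrank ℝ (ℝ ∙ T)ᗮ = 1 :=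
    Submodule.finrank_orthogonal_span_singleton (norm_ne_zero_iff.1 (hT ▸ one_ne_zero))
  have hmem : m ∈ (ℝ ∙ T)ᗮ := Submodule.mem_orthogonal_singleton_iff_inner_right.2 hTm
  have hz : z - ⟪T, z⟫ • T ∈ (ℝ ∙ T)ᗮ := by
    rw [Submodule.mem_orthogonal_singleton_iff_inner_right, inner_sub_right, inner_smul_right,
      real_inner_self_eq_norm_sq, hT, one_pow, mul_one, sub_self]
  obtain ⟨c, hc⟩ := exists_smul_eq_of_finrank_eq_one hfinrank
    (x := ⟨m, hmem⟩) (fun h => hm (congrArg Subtype.val h)) ⟨_, hz⟩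
  exact ⟨c, by rw [show c • m = z - ⟪T, z⟫ • T from congrArg Subtype.val hc, add_sub_cancel]⟩

theorem norm_le_of_transversal {E : Type*} [NormedAddCommGroup E] [InnerProductSpace ℝ E]
    [Fact (Module.finrank ℝ E = 1 + 1)] {T m p : E} (hT : ‖T‖ = 1) (hTm : ⟪T, m⟫ = 0)
    (hpm : ⟪p, m⟫ = 1) (z : E) :
    ‖z‖ ≤ (1 + ‖p‖ * ‖m‖) * |⟪T, z⟫| + ‖m‖ * |⟪p, z⟫| := by
  have hm : m ≠ 0 := by
    rintro rfl
    simp at hpm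
  obtain ⟨c, hz⟩ := exists_eq_inner_smul_add_smul hT hm hTm z
  have hc : c = ⟪p, z⟫ - ⟪T, z⟫ * ⟪p, T⟫ := by
    have hpz := congrArg (fun y => ⟪p, y⟫) hz
    simp only [inner_add_right, inner_smul_right, hpm] at hpz
    linarith
  have hc_le : |c| ≤ |⟪p, z⟫| + |⟪T, z⟫| * ‖p‖ := by
    have hpT : |⟪p, T⟫| ≤ ‖p‖ := by simpa [hT] using abs_real_inner_le_norm p T
    rw [hc]
    refine (abs_sub _ _).trans ?_
    rw [abs_mul]
    gcongr
  calc ‖z‖ = ‖⟪T, z⟫ • T + c • m‖ := by rw [← hz]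
    _ ≤ ‖⟪T, z⟫ • T‖ + ‖c • m‖ := norm_add_le _ _
    _ = |⟪T, z⟫| + |c| * ‖m‖ := by
        rw [norm_smul, norm_smul, hT, mul_one, Real.norm_eq_abs, Real.norm_eq_abs]
    _ ≤ |⟪T, z⟫| + (|⟪p, z⟫| + |⟪T, z⟫| * ‖p‖) * ‖m‖ := by gcongr
    _ = (1 + ‖p‖ * ‖m‖) * |⟪T, z⟫| + ‖m‖ * |⟪p, z⟫| := by ring

theorem deriv_le_of_forall_le {f f' : ℝ → ℝ} {M t₀ τ δ ε : ℝ} (hf : ∀ t, HasDerivAt f (f' t) t)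
    (hM : ∀ t, f t ≤ M) (ht₀ : M - δ ≤ f t₀) (hτ : 0 < τ)
    (hε : ∀ t, |t - t₀| ≤ τ → |f' t - f' t₀| ≤ ε) : f' t₀ ≤ δ / τ + ε := by
  obtain ⟨c, hc, hslope⟩ := exists_hasDerivAt_eq_slope f f' (lt_add_of_pos_right t₀ hτ)
    (fun t _ => (hf t).continuousAt.continuousWithinAt) fun t _ => hf t
  have hclose := abs_le.1 (hε c (abs_le.2 ⟨by linarith [hc.1], by linarith [hc.2]⟩))
  have hslope_le : f' c ≤ δ / τ := by
    rw [hslope, add_sub_cancel_left]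
    gcongr
    linarith [hM (t₀ + τ)]
  linarith

theorem abs_deriv_le_of_forall_le {f f' : ℝ → ℝ} {M t₀ τ δ ε : ℝ}
    (hf : ∀ t, HasDerivAt f (f' t) t) (hM : ∀ t, f t ≤ M) (ht₀ : M - δ ≤ f t₀) (hτ : 0 < τ)
    (hε : ∀ t, |t - t₀| ≤ τ → |f' t - f' t₀| ≤ ε) : |f' t₀| ≤ δ / τ + ε := by
  have hreflect : ∀ t, HasDerivAt (fun s => f (-s)) (-f' (-t)) t := fun t => by
    simpa [Function.comp_def] using (hf (-t)).scomp t (hasDerivAt_neg t)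
  have hneg := deriv_le_of_forall_le (t₀ := -t₀) hreflect (fun t => hM (-t))
    (by rwa [neg_neg]) hτ (ε := ε) fun t ht => by
      have hclose := hε (-t) (by rwa [← abs_neg, neg_sub', neg_neg])
      rwa [neg_neg, neg_sub_neg, abs_sub_comm]
  rw [neg_neg] at hneg
  exact abs_le.2 ⟨by linarith, deriv_le_of_forall_le hf hM ht₀ hτ hε⟩

namespace BoundaryParam

variable {Ω : Set E2} {γ γ' γ'' : ℝ → E2} {L : ℝ}

theorem pos (hbp : BoundaryParam Ω γ γ' γ'' L) : 0 < L := hbp.1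

theorem hasDerivAt (hbp : BoundaryParam Ω γ γ' γ'' L) (t : ℝ) : HasDerivAt γ (γ' t) t :=
  hbp.2.1 t

theorem norm_tangent (hbp : BoundaryParam Ω γ γ' γ'' L) (t : ℝ) : ‖γ' t‖ = 1 := hbp.2.2.2.1 t

theorem periodic (hbp : BoundaryParam Ω γ γ' γ'' L) : Function.Periodic γ L := hbp.2.2.2.2.1

theorem range_eq_frontier (hbp : BoundaryParam Ω γ γ' γ'' L) : range γ = frontier Ω := by
  rw [← hbp.2.2.2.2.2.1]
  refine (range_subset_iff.2 fun t => ?_).antisymm (image_subset_range _ _)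
  obtain ⟨s, hs, hts⟩ := hbp.periodic.exists_mem_Ico₀ hbp.pos t
  exact ⟨s, hs, hts.symm⟩

theorem mem_frontier (hbp : BoundaryParam Ω γ γ' γ'' L) (t : ℝ) : γ t ∈ frontier Ω :=
  hbp.range_eq_frontier ▸ mem_range_self t

theorem hasDerivAt_inner (hbp : BoundaryParam Ω γ γ' γ'' L) (x : E2) (t : ℝ) :
    HasDerivAt (fun s => ⟪γ s, x⟫) ⟪γ' t, x⟫ t := by
  simpa using (hbp.hasDerivAt t).inner ℝ (hasDerivAt_const t x)

theorem inner_tangent_eq_zero (hbp : BoundaryParam Ω γ γ' γ'' L) (hbdd : Bornology.IsBounded Ω)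
    {m : E2} (hm : m ∈ polarSet Ω) {t₀ : ℝ} (hm₀ : ⟪γ t₀, m⟫ = 1) : ⟪γ' t₀, m⟫ = 0 := by
  have hmax : IsLocalMax (fun t => ⟪γ t, m⟫) t₀ := .of_forall fun t => by
    simp only [hm₀]
    exact inner_le_one_of_mem_closure hbdd (frontier_subset_closure (hbp.mem_frontier t)) hm
  exact hmax.hasDerivAt_eq_zero (hbp.hasDerivAt_inner m t₀)

theorem abs_inner_tangent_le (hbp : BoundaryParam Ω γ γ' γ'' L) (hbdd : Bornology.IsBounded Ω)
    {x : E2} (hx : x ∈ polarSet Ω) {t₀ τ ω δ : ℝ} (hτ : 0 < τ)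
    (hω : ∀ t, |t - t₀| ≤ τ → ‖γ' t - γ' t₀‖ ≤ ω) (hδ : 1 - δ ≤ ⟪γ t₀, x⟫) :
    |⟪γ' t₀, x⟫| ≤ δ / τ + ω * ‖x‖ := by
  refine abs_deriv_le_of_forall_le (f := fun t => ⟪γ t, x⟫) (f' := fun t => ⟪γ' t, x⟫)
    (hbp.hasDerivAt_inner x) (fun t => ?_) hδ hτ fun t ht => ?_
  · exact inner_le_one_of_mem_closure hbdd (frontier_subset_closure (hbp.mem_frontier t)) hx
  · rw [← inner_sub_left]
    refine (abs_real_inner_le_norm _ _).trans ?_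
    gcongr
    exact hω t ht

theorem norm_sub_le_of_mem_polarSet (hbp : BoundaryParam Ω γ γ' γ'' L) (hconv : Convex ℝ Ω)
    (hopen : IsOpen Ω) (hbdd : Bornology.IsBounded Ω) {r : ℝ} (hr : 0 < r)
    (hball : Metric.closedBall 0 r ⊆ Ω) {t₀ τ ω δ : ℝ} (hτ : 0 < τ)
    (hω : ∀ t, |t - t₀| ≤ τ → ‖γ' t - γ' t₀‖ ≤ ω) {x y : E2} (hx : x ∈ polarSet Ω)
    (hy : y ∈ polarSet Ω) (hxδ : 1 - δ ≤ ⟪γ t₀, x⟫) (hyδ : 1 - δ ≤ ⟪γ t₀, y⟫) :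
    ‖x - y‖ ≤ (1 + ‖γ t₀‖ * r⁻¹) * (2 * (δ / τ + ω * r⁻¹)) + r⁻¹ * δ := by
  have hfrontier := hbp.mem_frontier t₀
  obtain ⟨m, hm, hpm⟩ := exists_mem_polarSet_inner_eq_one hconv hopen hbdd
    (hball (Metric.mem_closedBall_self hr.le)) (hopen.frontier_eq ▸ hfrontier).2
  have hω0 : 0 ≤ ω := (norm_nonneg _).trans (hω t₀ (by simpa using hτ.le))
  have hnorm : ∀ {z}, z ∈ polarSet Ω → ‖z‖ ≤ r⁻¹ := norm_le_inv_of_mem_polarSet hbdd hr hball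
  have hle_one : ∀ z ∈ polarSet Ω, ⟪γ t₀, z⟫ ≤ 1 := fun z hz =>
    inner_le_one_of_mem_closure hbdd (frontier_subset_closure hfrontier) hz
  have htangent : ∀ z ∈ polarSet Ω, 1 - δ ≤ ⟪γ t₀, z⟫ → |⟪γ' t₀, z⟫| ≤ δ / τ + ω * r⁻¹ := by
    intro z hz hzδ
    refine (hbp.abs_inner_tangent_le hbdd hz hτ hω hzδ).trans ?_
    gcongr
    exact hnorm hz
  have hTxy : |⟪γ' t₀, x - y⟫| ≤ 2 * (δ / τ + ω * r⁻¹) := by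
    rw [inner_sub_right]
    linarith [abs_sub ⟪γ' t₀, x⟫ ⟪γ' t₀, y⟫, htangent x hx hxδ, htangent y hy hyδ]
  have hpxy : |⟪γ t₀, x - y⟫| ≤ δ := by
    rw [inner_sub_right]
    exact abs_le.2 ⟨by linarith [hle_one y hy], by linarith [hle_one x hx]⟩
  have : Fact (Module.finrank ℝ E2 = 1 + 1) := ⟨by simp⟩
  refine (norm_le_of_transversal (hbp.norm_tangent t₀)
    (hbp.inner_tangent_eq_zero hbdd hm hpm) hpm (x - y)).trans ?_
  gcongr <;> exact hnorm hm

theorem capDiam_polarSet_le (hbp : BoundaryParam Ω γ γ' γ'' L) (hconv : Convex ℝ Ω)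
    (hopen : IsOpen Ω) (hbdd : Bornology.IsBounded Ω) {r : ℝ} (hr : 0 < r)
    (hball : Metric.closedBall 0 r ⊆ Ω) {t₀ τ ω δ : ℝ} (hδ : 0 ≤ δ) (hτ : 0 < τ)
    (hω : ∀ t, |t - t₀| ≤ τ → ‖γ' t - γ' t₀‖ ≤ ω) :
    capDiam (polarSet Ω) (γ t₀) δ ≤
      (1 + ‖γ t₀‖ * r⁻¹) * (2 * (δ / τ + ω * r⁻¹)) + r⁻¹ * δ := by
  have h0 : (0 : E2) ∈ Ω := hball (Metric.mem_closedBall_self hr.le)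
  have hω0 : 0 ≤ ω := (norm_nonneg _).trans (hω t₀ (by simpa using hτ.le))
  have hcap : ∀ x ∈ frontier (polarSet Ω), suppFn (polarSet Ω) (γ t₀) - δ ≤ ⟪x, γ t₀⟫ →
      x ∈ polarSet Ω ∧ 1 - δ ≤ ⟪γ t₀, x⟫ := by
    intro x hx hxδ
    rw [suppFn_polarSet_eq_one hconv hopen hbdd h0 (hbp.mem_frontier t₀),
      real_inner_comm] at hxδ
    exact ⟨(isClosed_polarSet hbdd ⟨0, h0⟩).frontier_subset hx, hxδ⟩
  refine Metric.diam_le_of_forall_dist_le (by positivity) ?_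
  rintro x ⟨hx, hxδ⟩ y ⟨hy, hyδ⟩
  rw [dist_eq_norm]
  exact hbp.norm_sub_le_of_mem_polarSet hconv hopen hbdd hr hball hτ hω (hcap x hx hxδ).1
    (hcap y hy hyδ).1 (hcap x hx hxδ).2 (hcap y hy hyδ).2

theorem exists_capDiam_polarSet_le (hbp : BoundaryParam Ω γ γ' γ'' L) (hconv : Convex ℝ Ω)
    (hopen : IsOpen Ω) (hbdd : Bornology.IsBounded Ω) (h0 : 0 ∈ Ω) :
    ∃ C, 0 ≤ C ∧ ∀ θ : E2, ‖θ‖ = 1 → ∀ δ τ ω : ℝ, 0 ≤ δ → 0 < τ →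
      (∀ s t, |s - t| ≤ τ → ‖γ' s - γ' t‖ ≤ ω) →
        capDiam (polarSet Ω) θ δ ≤ C * (δ / τ + δ + ω) := by
  have hnhds : Ω ∈ nhds 0 := hopen.mem_nhds h0
  obtain ⟨r, hr, hball⟩ := Metric.nhds_basis_closedBall.mem_iff.1 hnhds
  obtain ⟨ρ, hρ⟩ := hbdd.closure.exists_norm_le
  have hρ0 : 0 ≤ ρ := by simpa using hρ 0 (subset_closure h0)
  refine ⟨(1 + ρ * r⁻¹) * (2 * (ρ + r⁻¹)) + r⁻¹ * ρ, by positivity, ?_⟩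
  intro θ hθ δ τ ω hδ hτ hω
  have hω0 : 0 ≤ ω := (norm_nonneg _).trans (hω 0 0 (by simpa using hτ.le))
  obtain ⟨c, hc, hcθ⟩ := exists_pos_smul_mem_frontier hconv hbdd hnhds
    (norm_ne_zero_iff.1 (hθ ▸ one_ne_zero))
  obtain ⟨t₀, ht₀⟩ := hbp.range_eq_frontier.symm ▸ hcθ
  have hcρ : c ≤ ρ := by
    simpa [norm_smul, hθ, abs_of_pos hc] using hρ _ (frontier_subset_closure hcθ)
  have hcap := hbp.capDiam_polarSet_le hconv hopen hbdd hr hball (mul_nonneg hc.le hδ) hτ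
    fun t ht => hω t t₀ ht
  rw [ht₀, capDiam_smul _ hc, norm_smul, hθ, mul_one, Real.norm_of_nonneg hc.le] at hcap
  have hδτ : 0 ≤ δ / τ := by positivity
  have hslope : c * δ / τ + ω * r⁻¹ ≤ (ρ + r⁻¹) * (δ / τ + δ + ω) := by
    calc c * δ / τ + ω * r⁻¹ = c * (δ / τ) + r⁻¹ * ω := by ring
      _ ≤ ρ * (δ / τ + δ + ω) + r⁻¹ * (δ / τ + δ + ω) := by gcongr <;> linarith
      _ = (ρ + r⁻¹) * (δ / τ + δ + ω) := by ring
  have hdepth : c * δ ≤ ρ * (δ / τ + δ + ω) := by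
    gcongr
    linarith
  calc capDiam (polarSet Ω) θ δ
      ≤ (1 + c * r⁻¹) * (2 * (c * δ / τ + ω * r⁻¹)) + r⁻¹ * (c * δ) := hcap
    _ ≤ (1 + ρ * r⁻¹) * (2 * ((ρ + r⁻¹) * (δ / τ + δ + ω))) +
          r⁻¹ * (ρ * (δ / τ + δ + ω)) := by gcongr
    _ = _ := by ring

end BoundaryParam

/-! ### The modulus of continuity of the tangent -/

/-- The Young function `x log^g (2 + x)` defining the Zygmund class `L log^g L`. -/
def zygmundYoung (g x : ℝ) : ℝ := x * Real.log (2 + x) ^ g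

theorem log_two_add_pos {x : ℝ} (hx : 0 ≤ x) : 0 < Real.log (2 + x) :=
  Real.log_pos (by linarith)

theorem zygmundYoung_nonneg {g x : ℝ} (hx : 0 ≤ x) : 0 ≤ zygmundYoung g x :=
  mul_nonneg hx (Real.rpow_nonneg (log_two_add_pos hx).le g)

theorem le_add_log_rpow_mul_zygmundYoung {g x M : ℝ} (hg : 0 ≤ g) (hx : 0 ≤ x) (hM : 0 ≤ M) :
    x ≤ M + Real.log (2 + M) ^ (-g) * zygmundYoung g x := by
  have hlogM : 0 < Real.log (2 + M) := log_two_add_pos hM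
  rcases le_total x M with hxM | hMx
  · exact hxM.trans (le_add_of_nonneg_right
      (mul_nonneg (Real.rpow_nonneg hlogM.le _) (zygmundYoung_nonneg hx)))
  · have hlog : Real.log (2 + M) ^ g ≤ Real.log (2 + x) ^ g := by gcongr
    refine le_add_of_nonneg_of_le hM ?_
    rw [zygmundYoung, Real.rpow_neg hlogM.le, le_inv_mul_iff₀ (Real.rpow_pos_of_pos hlogM g),
      mul_comm]
    gcongr

theorem integral_norm_le_zygmundYoung {X E : Type*} [MeasurableSpace X] {μ : Measure X}
    [IsFiniteMeasure μ] [NormedAddCommGroup E] {f : X → E} {g M : ℝ} (hg : 0 ≤ g) (hM : 0 ≤ M)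
    (hf : Integrable (fun x => zygmundYoung g ‖f x‖) μ) :
    ∫ x, ‖f x‖ ∂μ ≤
      M * μ.real univ + Real.log (2 + M) ^ (-g) * ∫ x, zygmundYoung g ‖f x‖ ∂μ := by
  have hM_int : Integrable (fun _ : X => M) μ := integrable_const M
  calc ∫ x, ‖f x‖ ∂μ ≤ ∫ x, (M + Real.log (2 + M) ^ (-g) * zygmundYoung g ‖f x‖) ∂μ :=
        integral_mono_of_nonneg (.of_forall fun x => norm_nonneg _) (hM_int.add (hf.const_mul _))
          (.of_forall fun x => le_add_log_rpow_mul_zygmundYoung hg (norm_nonneg _) hM)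
    _ = _ := by
        rw [integral_add hM_int (hf.const_mul _), integral_const, integral_const_mul, smul_eq_mul,
          mul_comm M]

theorem dist_le_two_mul_of_periodic {X : Type*} [PseudoMetricSpace X] {F : ℝ → X} {L τ B : ℝ}
    (hF : Function.Periodic F L) (hL : 0 < L) (hτL : τ ≤ L)
    (hB : ∀ p q, 0 ≤ p → p ≤ q → q ≤ L → q - p ≤ τ → dist (F p) (F q) ≤ B) {s t : ℝ}
    (hst : |s - t| ≤ τ) : dist (F s) (F t) ≤ 2 * B := by
  wlog hle : s ≤ t generalizing s t
  · rw [dist_comm]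
    exact this (by rwa [abs_sub_comm]) (le_of_not_ge hle)
  obtain ⟨n, ⟨hp0, hpL⟩, -⟩ := existsUnique_sub_zsmul_mem_Ico hL s 0
  rw [← hF.sub_zsmul_eq n (x := s), ← hF.sub_zsmul_eq n (x := t)]
  have hτ : t - n • L - (s - n • L) ≤ τ := by
    rw [sub_sub_sub_cancel_right]
    exact (le_abs_self _).trans (by rwa [abs_sub_comm])
  have hpq : s - n • L ≤ t - n • L := sub_le_sub_right hle _
  generalize s - n • L = p at *
  generalize t - n • L = q at *
  have hτ0 : 0 ≤ τ := (sub_nonneg.2 hpq).trans hτ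
  have hB0 : 0 ≤ B := dist_nonneg.trans (hB 0 0 le_rfl le_rfl hL.le (by simpa using hτ0))
  rcases le_total q L with hqL | hLq
  · exact (hB p q hp0 hpq hqL hτ).trans (by linarith)
  · have hwrap : F L = F 0 := by simpa using hF 0
    have hleft : dist (F p) (F L) ≤ B := hB p L hp0 (by linarith) le_rfl (by linarith)
    have hright : dist (F L) (F q) ≤ B := by
      rw [hwrap, ← hF.sub_eq q]
      exact hB 0 (q - L) le_rfl (by linarith) (by linarith) (by linarith)
    linarith [dist_triangle (F p) (F L) (F q)]

theorem periodic_of_hasDerivAt {𝕜 E : Type*} [NontriviallyNormedField 𝕜] [NormedAddCommGroup E]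
    [NormedSpace 𝕜 E] {f f' : 𝕜 → E} {c : 𝕜} (hf : Function.Periodic f c)
    (hderiv : ∀ t, HasDerivAt f (f' t) t) : Function.Periodic f' c := by
  intro t
  have hshift := (hderiv (t + c)).comp_add_const t c
  rw [funext hf] at hshift
  exact hshift.unique (hderiv t)

namespace BoundaryParam

variable {Ω : Set E2} {γ γ' γ'' : ℝ → E2} {L : ℝ}

theorem periodic_tangent (hbp : BoundaryParam Ω γ γ' γ'' L) : Function.Periodic γ' L :=
  periodic_of_hasDerivAt hbp.periodic hbp.hasDerivAt

theorem tangent_sub_eq_integral (hbp : BoundaryParam Ω γ γ' γ'' L) (p q : ℝ) :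
    γ' q - γ' p = ∫ s in p..q, γ'' s := by
  obtain ⟨-, -, -, -, -, -, -, hint, hFTC⟩ := hbp
  rw [hFTC q, hFTC p, add_sub_add_left_eq_sub,
    intervalIntegral.integral_interval_sub_left (hint q) (hint p)]

theorem norm_tangent_sub_le_of_mem (hbp : BoundaryParam Ω γ γ' γ'' L) {g M : ℝ} (hg : 0 ≤ g)
    (hM : 0 ≤ M) (hLlogL : IntegrableOn (fun t => zygmundYoung g ‖γ'' t‖) (Icc 0 L)) {p q : ℝ}
    (hp : 0 ≤ p) (hpq : p ≤ q) (hq : q ≤ L) :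
    ‖γ' q - γ' p‖ ≤ M * (q - p) +
      Real.log (2 + M) ^ (-g) * ∫ t in Icc 0 L, zygmundYoung g ‖γ'' t‖ := by
  have hsub : Ioc p q ⊆ Icc 0 L := fun x hx => ⟨hp.trans hx.1.le, hx.2.trans hq⟩
  have hlogM : 0 < Real.log (2 + M) := log_two_add_pos hM
  rw [hbp.tangent_sub_eq_integral, intervalIntegral.integral_of_le hpq]
  calc ‖∫ t in Ioc p q, γ'' t‖ ≤ ∫ t in Ioc p q, ‖γ'' t‖ := norm_integral_le_integral_norm _
    _ ≤ M * (q - p) + Real.log (2 + M) ^ (-g) * ∫ t in Ioc p q, zygmundYoung g ‖γ'' t‖ := by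
        have hbound := integral_norm_le_zygmundYoung hg hM (hLlogL.mono_set hsub)
        rwa [measureReal_restrict_apply_univ, Real.volume_real_Ioc_of_le hpq] at hbound
    _ ≤ _ := by
        gcongr
        exact .of_forall fun t => zygmundYoung_nonneg (norm_nonneg _)

theorem norm_tangent_sub_le (hbp : BoundaryParam Ω γ γ' γ'' L) {g M τ : ℝ} (hg : 0 ≤ g)
    (hM : 0 ≤ M) (hLlogL : IntegrableOn (fun t => zygmundYoung g ‖γ'' t‖) (Icc 0 L)) (hτL : τ ≤ L)
    {s t : ℝ} (hst : |s - t| ≤ τ) :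
    ‖γ' s - γ' t‖ ≤ 2 * (M * τ +
      Real.log (2 + M) ^ (-g) * ∫ t in Icc 0 L, zygmundYoung g ‖γ'' t‖) := by
  rw [← dist_eq_norm]
  refine dist_le_two_mul_of_periodic hbp.periodic_tangent hbp.pos hτL ?_ hst
  intro p q hp hpq hq hτ
  rw [dist_comm, dist_eq_norm]
  refine (hbp.norm_tangent_sub_le_of_mem hg hM hLlogL hp hpq hq).trans ?_
  gcongr

end BoundaryParam

theorem log_rpow_le_mul_self {g x : ℝ} (hg : 0 < g) (hx : 1 ≤ x) :
    Real.log x ^ g ≤ g ^ g * x := by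
  have hx0 : 0 ≤ x := zero_le_one.trans hx
  have hlog : Real.log x ≤ g * x ^ g⁻¹ := by
    simpa [mul_comm] using Real.log_le_rpow_div hx0 (inv_pos.2 hg)
  calc Real.log x ^ g ≤ (g * x ^ g⁻¹) ^ g := Real.rpow_le_rpow (Real.log_nonneg hx) hlog hg.le
    _ = g ^ g * x := by
        rw [Real.mul_rpow hg.le (Real.rpow_nonneg hx0 _), Real.rpow_inv_rpow hx0 hg.ne']

theorem inv_le_log_two_add_rpow_neg {g q : ℝ} (hg : 0 < g) (hq : 1 ≤ q) :
    q⁻¹ ≤ 3 * g ^ g * Real.log (2 + q) ^ (-g) := by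
  have hlog : 0 < Real.log (2 + q) := log_two_add_pos (by linarith)
  rw [Real.rpow_neg hlog.le, ← div_eq_mul_inv, inv_eq_one_div,
    div_le_div_iff₀ (by linarith) (Real.rpow_pos_of_pos hlog g), one_mul]
  calc Real.log (2 + q) ^ g ≤ g ^ g * (2 + q) := log_rpow_le_mul_self hg (by linarith)
    _ ≤ g ^ g * (3 * q) := by
        gcongr
        linarith
    _ = 3 * g ^ g * q := by ring

theorem log_two_add_rpow_neg_le_pow {g q : ℝ} {n : ℕ} (hg : 0 ≤ g) (hq : 0 ≤ q) (hn : n ≠ 0) :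
    Real.log (2 + q) ^ (-g) ≤ n ^ g * Real.log (2 + q ^ n) ^ (-g) := by
  have hlog : 0 < Real.log (2 + q) := log_two_add_pos hq
  have hlogn : 0 < Real.log (2 + q ^ n) := log_two_add_pos (by positivity)
  have hlog_le : Real.log (2 + q ^ n) ≤ n * Real.log (2 + q) := by
    rw [← Real.log_pow]
    gcongr
    calc 2 + q ^ n ≤ 2 ^ n + q ^ n := by
          gcongr
          exact le_self_pow₀ one_le_two hn
      _ ≤ (2 + q) ^ n := pow_add_pow_le zero_le_two hq hn
  rw [Real.rpow_neg hlog.le, Real.rpow_neg hlogn.le, ← div_eq_mul_inv, inv_eq_one_div,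
    div_le_div_iff₀ (Real.rpow_pos_of_pos hlog g) (Real.rpow_pos_of_pos hlogn g), one_mul,
    ← Real.mul_rpow n.cast_nonneg hlog.le]
  gcongr

theorem exists_norm_le_inv_one_add_mul_log_rpow {E F : Type*} [SeminormedAddCommGroup E]
    [SeminormedAddCommGroup F] {f : E → F} {g V C : ℝ} (hg : 0 ≤ g) (hV : ∀ ξ, ‖f ξ‖ ≤ V)
    (hC : ∀ ξ, 1 ≤ ‖ξ‖ → ‖f ξ‖ ≤ C * ‖ξ‖⁻¹ * Real.log (2 + ‖ξ‖) ^ (-g)) :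
    ∃ C', ∀ ξ, ‖f ξ‖ ≤ C' * (1 + ‖ξ‖)⁻¹ * Real.log (2 + ‖ξ‖) ^ (-g) := by
  have hlog3 : 0 < Real.log 3 := Real.log_pos (by norm_num)
  have hV0 : 0 ≤ V := (norm_nonneg _).trans (hV 0)
  set A := max (V * Real.log 3 ^ g) C
  refine ⟨2 * A, fun ξ => ?_⟩
  have hlog : 0 < Real.log (2 + ‖ξ‖) := log_two_add_pos (norm_nonneg ξ)
  rcases le_total 1 ‖ξ‖ with hξ | hξ
  · have hinv : ‖ξ‖⁻¹ ≤ 2 * (1 + ‖ξ‖)⁻¹ := by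
      rw [← div_eq_mul_inv, inv_eq_one_div, div_le_div_iff₀ (by linarith) (by linarith)]
      linarith
    calc ‖f ξ‖ ≤ C * ‖ξ‖⁻¹ * Real.log (2 + ‖ξ‖) ^ (-g) := hC ξ hξ
      _ ≤ A * (2 * (1 + ‖ξ‖)⁻¹) * Real.log (2 + ‖ξ‖) ^ (-g) := by
          gcongr
          exact le_max_right _ _
      _ = _ := by ring
  · have hinv : 1 ≤ 2 * (1 + ‖ξ‖)⁻¹ := by
      rw [← div_eq_mul_inv, one_le_div (by positivity)]
      linarith
    have hlog_le : Real.log 3 ^ (-g) ≤ Real.log (2 + ‖ξ‖) ^ (-g) :=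
      Real.rpow_le_rpow_of_nonpos hlog (Real.log_le_log (by positivity) (by linarith))
        (neg_nonpos.2 hg)
    calc ‖f ξ‖ ≤ V := hV ξ
      _ = V * Real.log 3 ^ g * 1 * Real.log 3 ^ (-g) := by
          rw [mul_one, mul_assoc, ← Real.rpow_add hlog3, add_neg_cancel, Real.rpow_zero, mul_one]
      _ ≤ A * (2 * (1 + ‖ξ‖)⁻¹) * Real.log (2 + ‖ξ‖) ^ (-g) := by
          gcongr
          exact le_max_left _ _
      _ = _ := by ring

theorem balanced_error_le_log_two_add_rpow_neg {A c g L q : ℝ} (hc : 0 ≤ c) (hg : 0 < g)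
    (hL : 0 < L) (hq : 1 ≤ q) :
    c / q ^ 4 / (L / q ^ 2) + c / q ^ 4 + 2 * (q * (L / q ^ 2) + Real.log (2 + q) ^ (-g) * A) ≤
      ((c / L + c + 2 * L) * (3 * g ^ g) + 2 * A) * Real.log (2 + q) ^ (-g) := by
  set Λ := Real.log (2 + q) ^ (-g)
  calc c / q ^ 4 / (L / q ^ 2) + c / q ^ 4 + 2 * (q * (L / q ^ 2) + Λ * A)
      = c / L * (q ^ 2)⁻¹ + c * (q ^ 4)⁻¹ + 2 * L * q⁻¹ + 2 * A * Λ := by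
        field_simp
        ring
    _ ≤ c / L * q⁻¹ + c * q⁻¹ + 2 * L * q⁻¹ + 2 * A * Λ := by
        gcongr
        · exact le_self_pow₀ hq two_ne_zero
        · exact le_self_pow₀ hq four_ne_zero
    _ = (c / L + c + 2 * L) * q⁻¹ + 2 * A * Λ := by ring
    _ ≤ (c / L + c + 2 * L) * (3 * g ^ g * Λ) + 2 * A * Λ := by
        gcongr
        exact inv_le_log_two_add_rpow_neg hg hq
    _ = ((c / L + c + 2 * L) * (3 * g ^ g) + 2 * A) * Λ := by ring

theorem BoundaryParam.exists_capDiam_polarSet_le_log {Ω : Set E2} {γ γ' γ'' : ℝ → E2} {L : ℝ}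
    (hbp : BoundaryParam Ω γ γ' γ'' L) (hconv : Convex ℝ Ω) (hopen : IsOpen Ω)
    (hbdd : Bornology.IsBounded Ω) (h0 : 0 ∈ Ω) {g : ℝ} (hg : 0 < g)
    (hLlogL : IntegrableOn (fun t => zygmundYoung g ‖γ'' t‖) (Icc 0 L)) {c : ℝ} (hc : 0 ≤ c) :
    ∃ C, ∀ θ : E2, ‖θ‖ = 1 → ∀ R : ℝ, 1 ≤ R →
      capDiam (polarSet Ω) θ (c / R) ≤ C * Real.log (2 + R) ^ (-g) := by
  obtain ⟨C₀, hC₀, hcap⟩ := hbp.exists_capDiam_polarSet_le hconv hopen hbdd h0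
  have hL := hbp.pos
  set A := ∫ t in Icc 0 L, zygmundYoung g ‖γ'' t‖
  have hA : 0 ≤ A := integral_nonneg fun t => zygmundYoung_nonneg (norm_nonneg _)
  set B := (c / L + c + 2 * L) * (3 * g ^ g) + 2 * A
  refine ⟨C₀ * B * 4 ^ g, fun θ hθ R hR => ?_⟩
  obtain ⟨q, hq, rfl⟩ : ∃ q : ℝ, 1 ≤ q ∧ q ^ 4 = R :=
    ⟨R ^ (4⁻¹ : ℝ), Real.one_le_rpow hR (by norm_num), by
      rw [← Real.rpow_natCast, ← Real.rpow_mul (by linarith)]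
      norm_num⟩
  have hq0 : 0 < q := by linarith
  have hτL : L / q ^ 2 ≤ L := div_le_self hL.le (one_le_pow₀ hq)
  calc capDiam (polarSet Ω) θ (c / q ^ 4)
      ≤ C₀ * (c / q ^ 4 / (L / q ^ 2) + c / q ^ 4 +
          2 * (q * (L / q ^ 2) + Real.log (2 + q) ^ (-g) * A)) :=
        hcap θ hθ _ _ _ (by positivity) (by positivity) fun s t =>
          hbp.norm_tangent_sub_le hg.le hq0.le hLlogL hτL
    _ ≤ C₀ * (B * (4 ^ g * Real.log (2 + q ^ 4) ^ (-g))) := by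
        gcongr
        refine (balanced_error_le_log_two_add_rpow_neg hc hg hL hq).trans ?_
        gcongr
        exact log_two_add_rpow_neg_le_pow hg.le hq0.le four_ne_zero
    _ = C₀ * B * 4 ^ g * Real.log (2 + q ^ 4) ^ (-g) := by ring

theorem statement10_general (Ω : Set E2) (hconv : Convex ℝ Ω) (hopen : IsOpen Ω)
    (hbdd : Bornology.IsBounded Ω) (h0 : (0 : E2) ∈ Ω)
    (γ γ' γ'' : ℝ → E2) (L : ℝ) (hbp : BoundaryParam Ω γ γ' γ'' L) (g : ℝ) (hg : 0 < g)
    (hLlogL : IntegrableOn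
      (fun t => ‖γ'' t‖ * Real.log (2 + ‖γ'' t‖) ^ g) (Set.Icc 0 L)) :
    ∃ C : ℝ, ∀ ξ : E2,
      ‖fourierInd (polarSet Ω) ξ‖ ≤ C * (1 + ‖ξ‖)⁻¹ * Real.log (2 + ‖ξ‖) ^ (-g) := by
  have hcompact : IsCompact (polarSet Ω) := isCompact_polarSet hbdd (hopen.mem_nhds h0)
  have hconvex : Convex ℝ (polarSet Ω) := convex_polarSet hbdd ⟨0, h0⟩
  obtain ⟨C, hcap⟩ := hbp.exists_capDiam_polarSet_le_log hconv hopen hbdd h0 hg hLlogL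
    Real.two_pi_pos.le
  refine exists_norm_le_inv_one_add_mul_log_rpow (C := 2 * Real.pi * (2 * C)) hg.le
    (norm_fourierInd_le_volume_real (S := polarSet Ω)) fun ξ hξ => ?_
  have hξ0 : ‖ξ‖ ≠ 0 := by linarith
  set θ := ‖ξ‖⁻¹ • ξ
  have hθ : ‖θ‖ = 1 := by
    rw [norm_smul, norm_inv, norm_norm, inv_mul_cancel₀ hξ0]
  have hξθ : ‖ξ‖ • θ = ξ := smul_inv_smul₀ hξ0 ξ
  calc ‖fourierInd (polarSet Ω) ξ‖ = ‖fourierInd (polarSet Ω) (‖ξ‖ • θ)‖ := by rw [hξθ]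
    _ ≤ 2 * Real.pi / ‖ξ‖ * (capDiam (polarSet Ω) θ (2 * Real.pi / ‖ξ‖) +
          capDiam (polarSet Ω) (-θ) (2 * Real.pi / ‖ξ‖)) :=
        norm_fourierInd_le_capDiam hcompact hconvex hθ (by linarith)
    _ ≤ 2 * Real.pi / ‖ξ‖ * (C * Real.log (2 + ‖ξ‖) ^ (-g) + C * Real.log (2 + ‖ξ‖) ^ (-g)) := by
        gcongr
        · exact hcap θ hθ _ hξ
        · exact hcap (-θ) ((norm_neg θ).trans hθ) _ hξ
    _ = _ := by ring

/-- Lemma 5.3: if `Ω` is a bounded open convex planar domain containing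
the origin, with `C¹` boundary, absolutely continuous unit tangent, curvature
`κ = ‖γ''‖ ≥ a > 0` a.e. and `κ ∈ L log^γ L(∂Ω)`, then
`|χ̂_{Ω*}(ξ)| ≤ C (1+|ξ|)^{−1} (log(2+|ξ|))^{−γ}` for all `ξ`. -/
theorem statement10 (Ω : Set E2) (hconv : Convex ℝ Ω) (hopen : IsOpen Ω)
    (hbdd : Bornology.IsBounded Ω) (h0 : (0 : E2) ∈ Ω)
    (γ γ' γ'' : ℝ → E2) (L : ℝ) (hbp : BoundaryParam Ω γ γ' γ'' L)
    (a g : ℝ) (ha : 0 < a) (hg : 0 < g)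
    (hlow : ∀ᵐ t ∂(volume.restrict (Set.Icc 0 L)), a ≤ ‖γ'' t‖)
    (hLlogL : IntegrableOn
      (fun t => ‖γ'' t‖ * Real.log (2 + ‖γ'' t‖) ^ g) (Set.Icc 0 L)) :
    ∃ C : ℝ, ∀ ξ : E2,
      ‖fourierInd (polarSet Ω) ξ‖ ≤ C * (1 + ‖ξ‖)⁻¹ * Real.log (2 + ‖ξ‖) ^ (-g) := by
  exact statement10_general Ω hconv hopen hbdd h0 γ γ' γ'' L hbp g hg hLlogL

end
end

section
/- Suppose F₁, …, F_J are points of ℤ² which are the vertices of a convex polygonal curve: for i = 1,…,J−1 write the vector from F_i to F_{i+1} as L_i (cos β_i, sin β_i) with L_i > 0, and assume β_{i+1} > β_i for all i and β_{J−1} − β₁ ≤ 2π. Set L = Σ_{i=1}^{J−1} L_i. Then J ≤ 2 + (β_{J−1} − β₁)^{1/3} L^{2/3}. -/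
/-!
Consecutive edge vectors, of lengths `l`, `l'` and directions `t < t'`, satisfy
`1 ≤ l * l' * (t' - t)`: if `t' - t < π`, their cross product `l * l' * sin (t' - t)` is a positive
integer and `sin x ≤ x`, while if `π ≤ t' - t` it suffices that nonzero lattice vectors have length
at least `1`. Taking cube roots, summing over the `J - 2` pairs of consecutive edges and applying
Hölder's inequality with three factors gives `J - 2 ≤ L ^ (1 / 3) * L ^ (1 / 3) * Θ ^ (1 / 3)`,
where `Θ` is the total turning angle `∑ (β (i + 1) - β i) = β (J - 1) - β 1`.
-/

open Set

noncomputable section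

/-- The embedding of an integer point into the real plane. -/
def pt (p : ℤ × ℤ) : ℝ × ℝ := ((p.1 : ℝ), (p.2 : ℝ))

theorem sum_prod_rpow_le_prod_sum_rpow {ι κ : Type*} (s : Finset ι) (t : Finset κ)
    {f : ι → κ → ℝ} {w : κ → ℝ} (hf : ∀ i ∈ s, ∀ k ∈ t, 0 ≤ f i k)
    (hw : ∀ k ∈ t, 0 ≤ w k) (hw_sum : ∑ k ∈ t, w k = 1) :
    ∑ i ∈ s, ∏ k ∈ t, f i k ^ w k ≤ ∏ k ∈ t, (∑ i ∈ s, f i k) ^ w k := by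
  set S : κ → ℝ := fun k => ∑ i ∈ s, f i k with hS
  have S_nonneg : ∀ k ∈ t, 0 ≤ S k := fun k hk => Finset.sum_nonneg fun i hi => hf i hi k hk
  have normalize : ∀ i ∈ s, ∀ k ∈ t, f i k ^ w k = (f i k / S k) ^ w k * S k ^ w k := by
    intro i hi k hk
    have eq_zero : S k = 0 → f i k = 0 := fun h =>
      (Finset.sum_eq_zero_iff_of_nonneg fun j hj => hf j hj k hk).1 h i hi
    rw [← Real.mul_rpow (div_nonneg (hf i hi k hk) (S_nonneg k hk)) (S_nonneg k hk),
      div_mul_cancel_of_imp eq_zero]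
  have sum_normalized_le : ∑ i ∈ s, ∏ k ∈ t, (f i k / S k) ^ w k ≤ 1 :=
    calc ∑ i ∈ s, ∏ k ∈ t, (f i k / S k) ^ w k
        ≤ ∑ i ∈ s, ∑ k ∈ t, w k * (f i k / S k) := Finset.sum_le_sum fun i hi =>
          Real.geom_mean_le_arith_mean_weighted t w _ hw hw_sum fun k hk =>
            div_nonneg (hf i hi k hk) (S_nonneg k hk)
      _ = ∑ k ∈ t, w k * (S k / S k) := by
          rw [Finset.sum_comm]
          simp only [hS, Finset.sum_div, Finset.mul_sum]
      _ ≤ ∑ k ∈ t, w k := Finset.sum_le_sum fun k hk =>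
          mul_le_of_le_one_right (hw k hk) (div_self_le_one (S k))
      _ = 1 := hw_sum
  calc ∑ i ∈ s, ∏ k ∈ t, f i k ^ w k
      = (∑ i ∈ s, ∏ k ∈ t, (f i k / S k) ^ w k) * ∏ k ∈ t, S k ^ w k := by
        rw [Finset.sum_mul]
        refine Finset.sum_congr rfl fun i hi => ?_
        rw [← Finset.prod_mul_distrib]
        exact Finset.prod_congr rfl (normalize i hi)
    _ ≤ ∏ k ∈ t, S k ^ w k :=
        mul_le_of_le_one_left
          (Finset.prod_nonneg fun k hk => Real.rpow_nonneg (S_nonneg k hk) _) sum_normalized_le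

theorem card_le_sum_rpow_mul_sum_rpow_mul_sum_rpow {ι : Type*} (s : Finset ι) {f g h : ι → ℝ}
    (hf : ∀ i ∈ s, 0 ≤ f i) (hg : ∀ i ∈ s, 0 ≤ g i) (hh : ∀ i ∈ s, 0 ≤ h i)
    (one_le : ∀ i ∈ s, 1 ≤ f i * g i * h i) :
    (s.card : ℝ) ≤ (∑ i ∈ s, f i) ^ ((1 : ℝ) / 3) * (∑ i ∈ s, g i) ^ ((1 : ℝ) / 3) *
      (∑ i ∈ s, h i) ^ ((1 : ℝ) / 3) := by
  have holder := sum_prod_rpow_le_prod_sum_rpow s Finset.univ (f := fun i => ![f i, g i, h i])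
    (w := fun _ => (1 : ℝ) / 3)
    (fun i hi k _ => by fin_cases k; exacts [hf i hi, hg i hi, hh i hi])
    (fun _ _ => by norm_num) (by simp)
  simp only [Fin.prod_univ_three, Matrix.cons_val] at holder
  have one_le_rpow : ∀ i ∈ s, 1 ≤ f i ^ ((1 : ℝ) / 3) * g i ^ ((1 : ℝ) / 3) *
      h i ^ ((1 : ℝ) / 3) := by
    intro i hi
    rw [← Real.mul_rpow (hf i hi) (hg i hi),
      ← Real.mul_rpow (mul_nonneg (hf i hi) (hg i hi)) (hh i hi)]
    exact Real.one_le_rpow (one_le i hi) (by norm_num)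
  calc (s.card : ℝ) = s.card • (1 : ℝ) := (nsmul_one _).symm
    _ ≤ _ := Finset.card_nsmul_le_sum s _ 1 one_le_rpow
    _ ≤ _ := holder

theorem sub_le_rpow_mul_rpow_of_one_le_mul_mul_sub {l β : ℕ → ℝ} {a b : ℕ} (hab : a ≤ b)
    (hl : ∀ i ∈ Finset.Icc a b, 0 ≤ l i)
    (one_le : ∀ i ∈ Finset.Ico a b, 1 ≤ l i * l (i + 1) * (β (i + 1) - β i)) :
    (b - a : ℝ) ≤ (β b - β a) ^ ((1 : ℝ) / 3) * (∑ i ∈ Finset.Icc a b, l i) ^ ((2 : ℝ) / 3) := by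
  set S := ∑ i ∈ Finset.Icc a b, l i
  have S_nonneg : 0 ≤ S := Finset.sum_nonneg hl
  have hl_left : ∀ i ∈ Finset.Ico a b, 0 ≤ l i := fun i hi =>
    hl i (Finset.Ico_subset_Icc_self hi)
  have hl_right : ∀ i ∈ Finset.Ico a b, 0 ≤ l (i + 1) := fun i hi =>
    hl (i + 1) (by simp only [Finset.mem_Ico, Finset.mem_Icc] at hi ⊢; omega)
  have hβ : ∀ i ∈ Finset.Ico a b, 0 ≤ β (i + 1) - β i := fun i hi =>
    (pos_of_mul_pos_right (one_pos.trans_le (one_le i hi))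
      (mul_nonneg (hl_left i hi) (hl_right i hi))).le
  have sum_left_le : ∑ i ∈ Finset.Ico a b, l i ≤ S :=
    Finset.sum_le_sum_of_subset_of_nonneg Finset.Ico_subset_Icc_self fun i hi _ => hl i hi
  have sum_right_le : ∑ i ∈ Finset.Ico a b, l (i + 1) ≤ S := by
    rw [Finset.sum_Ico_add' l a b 1]
    refine Finset.sum_le_sum_of_subset_of_nonneg (fun i hi => ?_) fun i hi _ => hl i hi
    simp only [Finset.mem_Ico, Finset.mem_Icc] at hi ⊢
    omega
  calc (b - a : ℝ) = ((Finset.Ico a b).card : ℝ) := by rw [Nat.card_Ico, Nat.cast_sub hab]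
    _ ≤ (∑ i ∈ Finset.Ico a b, l i) ^ ((1 : ℝ) / 3) *
          (∑ i ∈ Finset.Ico a b, l (i + 1)) ^ ((1 : ℝ) / 3) *
          (∑ i ∈ Finset.Ico a b, (β (i + 1) - β i)) ^ ((1 : ℝ) / 3) :=
        card_le_sum_rpow_mul_sum_rpow_mul_sum_rpow _ hl_left hl_right hβ one_le
    _ ≤ S ^ ((1 : ℝ) / 3) * S ^ ((1 : ℝ) / 3) *
          (∑ i ∈ Finset.Ico a b, (β (i + 1) - β i)) ^ ((1 : ℝ) / 3) := by
        have := Finset.sum_nonneg hl_left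
        have := Finset.sum_nonneg hl_right
        have := Finset.sum_nonneg hβ
        gcongr
    _ = (β b - β a) ^ ((1 : ℝ) / 3) * S ^ ((2 : ℝ) / 3) := by
        rw [Finset.sum_Ico_sub β hab, mul_comm,
          ← Real.rpow_add_of_nonneg S_nonneg (by norm_num) (by norm_num)]
        norm_num

theorem one_le_radius_of_pt_eq_polarCoord_symm {v : ℤ × ℤ} {r θ : ℝ} (hr : 0 < r)
    (hv : pt v = polarCoord.symm (r, θ)) : 1 ≤ r := by
  obtain ⟨hx, hy⟩ := Prod.ext_iff.1 hv
  simp only [pt, polarCoord_symm_apply] at hx hy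
  have norm_sq : ((v.1 ^ 2 + v.2 ^ 2 : ℤ) : ℝ) = r ^ 2 := by
    push_cast
    rw [hx, hy]
    linear_combination r ^ 2 * Real.cos_sq_add_sin_sq θ
  have norm_sq_pos : 0 < v.1 ^ 2 + v.2 ^ 2 := by
    rw [← Int.cast_pos (R := ℝ), norm_sq]
    positivity
  rw [← one_le_sq_iff₀ hr.le, ← norm_sq]
  exact Int.cast_one_le_of_pos norm_sq_pos

theorem one_le_mul_mul_sin_sub_of_pt_eq_polarCoord_symm {v v' : ℤ × ℤ} {r r' θ θ' : ℝ}
    (hv : pt v = polarCoord.symm (r, θ)) (hv' : pt v' = polarCoord.symm (r', θ'))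
    (hpos : 0 < r * r' * Real.sin (θ' - θ)) : 1 ≤ r * r' * Real.sin (θ' - θ) := by
  obtain ⟨hx, hy⟩ := Prod.ext_iff.1 hv
  obtain ⟨hx', hy'⟩ := Prod.ext_iff.1 hv'
  simp only [pt, polarCoord_symm_apply] at hx hy hx' hy'
  have cross : ((v.1 * v'.2 - v.2 * v'.1 : ℤ) : ℝ) = r * r' * Real.sin (θ' - θ) := by
    push_cast
    rw [hx, hy, hx', hy', Real.sin_sub]
    ring
  rw [← cross] at hpos ⊢
  exact Int.cast_one_le_of_pos (Int.cast_pos.1 hpos)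

theorem one_le_mul_mul_sub_of_pt_eq_polarCoord_symm {v v' : ℤ × ℤ} {r r' θ θ' : ℝ}
    (hr : 0 < r) (hr' : 0 < r') (hθ : θ < θ')
    (hv : pt v = polarCoord.symm (r, θ)) (hv' : pt v' = polarCoord.symm (r', θ')) :
    1 ≤ r * r' * (θ' - θ) := by
  have hθ_sub : 0 < θ' - θ := sub_pos.2 hθ
  rcases lt_or_ge (θ' - θ) Real.pi with hlt | hge
  · have hsin : 0 < Real.sin (θ' - θ) := Real.sin_pos_of_pos_of_lt_pi hθ_sub hlt
    calc 1 ≤ r * r' * Real.sin (θ' - θ) :=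
          one_le_mul_mul_sin_sub_of_pt_eq_polarCoord_symm hv hv' (by positivity)
      _ ≤ r * r' * (θ' - θ) := by
          gcongr
          exact Real.sin_le hθ_sub.le
  · have one_le_r := one_le_radius_of_pt_eq_polarCoord_symm hr hv
    have one_le_r' := one_le_radius_of_pt_eq_polarCoord_symm hr' hv'
    have one_le_sub : 1 ≤ θ' - θ := by linarith [Real.pi_gt_three]
    exact one_le_mul_of_one_le_of_one_le
      (one_le_mul_of_one_le_of_one_le one_le_r one_le_r') one_le_sub

theorem statement12_general (J : ℕ) (F : ℕ → ℤ × ℤ) (L β : ℕ → ℝ)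
    (hvec : ∀ i : ℕ, 1 ≤ i → i ≤ J - 1 →
      ((F (i + 1)).1 - (F i).1 : ℝ) = L i * Real.cos (β i) ∧
      ((F (i + 1)).2 - (F i).2 : ℝ) = L i * Real.sin (β i))
    (hL : ∀ i : ℕ, 1 ≤ i → i ≤ J - 1 → 0 < L i)
    (hβ : ∀ i : ℕ, 1 ≤ i → i + 1 ≤ J - 1 → β i < β (i + 1)) :
    (J : ℝ) ≤ 2 + (β (J - 1) - β 1) ^ ((1 : ℝ) / 3) *
      (∑ i ∈ Finset.Icc 1 (J - 1), L i) ^ ((2 : ℝ) / 3) := by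
  rcases lt_or_ge J 2 with hJ | hJ
  · -- `β (J - 1)` is now the unconstrained `β 0`, but the empty sum of lengths kills its factor.
    interval_cases J <;> norm_num
  have edge : ∀ i, 1 ≤ i → i ≤ J - 1 →
      pt (F (i + 1) - F i) = polarCoord.symm (L i, β i) := fun i hi hiJ => by
    simpa [pt, Prod.ext_iff] using hvec i hi hiJ
  have one_le : ∀ i ∈ Finset.Ico 1 (J - 1), 1 ≤ L i * L (i + 1) * (β (i + 1) - β i) := by
    intro i hi
    obtain ⟨hi₁, hiJ⟩ := Finset.mem_Ico.1 hi
    exact one_le_mul_mul_sub_of_pt_eq_polarCoord_symm (hL i hi₁ hiJ.le)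
      (hL (i + 1) i.succ_pos hiJ) (hβ i hi₁ hiJ) (edge i hi₁ hiJ.le) (edge (i + 1) i.succ_pos hiJ)
  have L_nonneg : ∀ i ∈ Finset.Icc 1 (J - 1), 0 ≤ L i := fun i hi =>
    (hL i (Finset.mem_Icc.1 hi).1 (Finset.mem_Icc.1 hi).2).le
  have bound := sub_le_rpow_mul_rpow_of_one_le_mul_mul_sub (by omega) L_nonneg one_le
  rw [Nat.cast_sub (by omega), Nat.cast_one] at bound
  linarith

/-- Lemma 7.1: if `F₁, …, F_J ∈ ℤ²` are the vertices of a convex polygonal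
curve, i.e. the interiors of the successive segments are mutually disjoint and
`F_{i+1} − F_i = L_i (cos β_i, sin β_i)` with `L_i > 0` and `β_{i+1} > β_i`, and if
`β_{J−1} − β₁ ≤ 2π` and `L = Σ_{i=1}^{J−1} L_i`, then `J ≤ 2 + (β_{J−1} − β₁)^{1/3} L^{2/3}`. -/
theorem statement12 (J : ℕ) (F : ℕ → ℤ × ℤ) (L β : ℕ → ℝ) (Ltot : ℝ)
    (hdisj : ∀ i j : ℕ, 1 ≤ i → i < j → j ≤ J - 1 →
      openSegment ℝ (pt (F i)) (pt (F (i + 1))) ∩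
        openSegment ℝ (pt (F j)) (pt (F (j + 1))) = ∅)
    (hvec : ∀ i : ℕ, 1 ≤ i → i ≤ J - 1 →
      ((F (i + 1)).1 - (F i).1 : ℝ) = L i * Real.cos (β i) ∧
      ((F (i + 1)).2 - (F i).2 : ℝ) = L i * Real.sin (β i))
    (hL : ∀ i : ℕ, 1 ≤ i → i ≤ J - 1 → 0 < L i)
    (hβ : ∀ i : ℕ, 1 ≤ i → i + 1 ≤ J - 1 → β i < β (i + 1))
    (hβtot : β (J - 1) - β 1 ≤ 2 * Real.pi)
    (hLtot : Ltot = ∑ i ∈ Finset.Icc 1 (J - 1), L i) :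
    (J : ℝ) ≤ 2 + (β (J - 1) - β 1) ^ ((1 : ℝ) / 3) * Ltot ^ ((2 : ℝ) / 3) := by
  subst hLtot
  exact statement12_general J F L β hvec hL hβ

end
end
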